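/- arXiv:2005.12355 — 6 statements merged into one kernel-verified Lean document; each statement's English description precedes it below -/
import Mathlib

section
/- I(F) is a P-ideal: for every sequence (A_k) of sets with A_k ∈ I(F) for every k, there exists a set A ∈ I(F) such that A_k \ A is finite for every k. -/
open Filter

/-- `mu F n A = |A ∩ F n| / |F n|`. -/
noncomputable def mu (F : ℕ → Finset ℕ) (n : ℕ) (A : Set ℕ) : ℝ :=
  (A ∩ (F n : Set ℕ)).ncard / (F n).card

/-!
Remove from each `A k` the finite set of points lying in some `F i` for which the submeasure of
`A 0 ∪ ⋯ ∪ A k` is still at least `1 / (k + 1)`, and let `B` be the union of what remains.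
Inside a fixed finite set `F i`, the set `B` is covered by finitely many of those `A k` whose bound
already holds at `i`; if `k` is the largest index involved, the submeasure of `B` at `i` is less
than `1 / (k + 1)`. For all but finitely many `i`, any prescribed index may be included among them.
-/

/-- A real-valued submeasure on all subsets of `α`: a monotone, finitely subadditive set function
vanishing at `∅`. It abstracts the properties of `mu F n` needed to form an ideal of null sets. -/
structure IsSubmeasure {α : Type*} (φ : Set α → ℝ) : Prop where
  empty : φ ∅ = 0
  mono : Monotone φ
  union_le (A B : Set α) : φ (A ∪ B) ≤ φ A + φ B

/-- The union of the sets `A k`, each trimmed by deleting the sets `F i` with `i ∈ S k`. For finite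
`S k` it almost contains every `A k`, and it meets `F i` only in those `A k` with `i ∉ S k`. -/
def trimmedUnion {α ι κ : Type*} (F : ι → Finset α) (S : κ → Set ι) (A : κ → Set α) : Set α :=
  ⋃ k, A k \ ⋃ i ∈ S k, (F i : Set α)

section TrimmedUnion

variable {α ι κ : Type*} (F : ι → Finset α) {S : κ → Set ι} (A : κ → Set α)

theorem finite_sdiff_trimmedUnion {k : κ} (hS : (S k).Finite) :
    (A k \ trimmedUnion F S A).Finite := by
  refine (hS.biUnion fun i _ => (F i).finite_toSet).subset ?_
  rintro x ⟨hxA, hxB⟩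
  by_contra hxF
  exact hxB (Set.mem_iUnion.mpr ⟨k, hxA, hxF⟩)

theorem trimmedUnion_inter_subset (i : ι) :
    trimmedUnion F S A ∩ F i ⊆ ⋃ k ∈ {k | i ∉ S k}, A k := by
  rintro x ⟨hxB, hxF⟩
  obtain ⟨k, hxA, hx⟩ := Set.mem_iUnion.mp hxB
  exact Set.mem_biUnion (fun hi => hx (Set.mem_biUnion hi hxF)) hxA

end TrimmedUnion

theorem exists_subset_accumulate_of_subset_biUnion {α κ : Type*} [LinearOrder κ] {A : κ → Set α}
    {T : Set κ} {s : Finset α} (hs : (s : Set α) ⊆ ⋃ k ∈ T, A k) {K : κ} (hK : K ∈ T) :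
    ∃ k ∈ T, K ≤ k ∧ (s : Set α) ⊆ Set.accumulate A k := by
  have hcover : (s : Set α) ⊆ ⋃ k ∈ T ∩ Set.Ici K, Set.accumulate A k := by
    refine hs.trans (Set.iUnion₂_subset fun j hj => ?_)
    have hmax : max j K ∈ T ∩ Set.Ici K := ⟨max_rec' (· ∈ T) hj hK, le_max_right j K⟩
    exact (Set.subset_accumulate.trans (Set.monotone_accumulate (le_max_left j K))).trans
      (Set.subset_biUnion_of_mem hmax)
  have hdir : DirectedOn (fun i j => Set.accumulate A i ⊆ Set.accumulate A j) (T ∩ Set.Ici K) :=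
    fun i hi j hj => ⟨max i j, max_rec' (· ∈ T ∩ Set.Ici K) hi hj,
      Set.monotone_accumulate (le_max_left i j), Set.monotone_accumulate (le_max_right i j)⟩
  have hnonempty : (T ∩ Set.Ici K).Nonempty := ⟨K, hK, Set.self_mem_Ici⟩
  obtain ⟨k, ⟨hkT, hKk⟩, hsk⟩ :=
    hdir.exists_mem_subset_of_finset_subset_biUnion hnonempty hcover
  exact ⟨k, hkT, hKk, hsk⟩

namespace IsSubmeasure

variable {α ι : Type*}

theorem nonneg {φ : Set α → ℝ} (hφ : IsSubmeasure φ) (A : Set α) : 0 ≤ φ A :=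
  hφ.empty ▸ hφ.mono (Set.empty_subset A)

variable {φ : ι → Set α → ℝ}

theorem tendsto_union {l : Filter ι} (hφ : ∀ i, IsSubmeasure (φ i)) {A B : Set α}
    (hA : Tendsto (fun i => φ i A) l (nhds 0)) (hB : Tendsto (fun i => φ i B) l (nhds 0)) :
    Tendsto (fun i => φ i (A ∪ B)) l (nhds 0) :=
  squeeze_zero (fun i => (hφ i).nonneg _) (fun i => (hφ i).union_le A B)
    (by simpa only [add_zero] using hA.add hB)

theorem tendsto_accumulate {l : Filter ι} (hφ : ∀ i, IsSubmeasure (φ i)) {A : ℕ → Set α}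
    (hA : ∀ k, Tendsto (fun i => φ i (A k)) l (nhds 0)) (k : ℕ) :
    Tendsto (fun i => φ i (Set.accumulate A k)) l (nhds 0) := by
  induction k with
  | zero => simpa only [Set.accumulate_zero_nat] using hA 0
  | succ k ih => simpa only [Set.accumulate_succ] using tendsto_union hφ ih (hA (k + 1))

theorem apply_trimmedUnion_lt {F : ι → Finset α} (hφ : ∀ i, IsSubmeasure (φ i))
    (hF : ∀ i A, φ i (A ∩ F i) = φ i A) {A : ℕ → Set α} {ε : ℕ → ℝ} (hε : Antitone ε)
    {i : ι} {K : ℕ} (hK : φ i (Set.accumulate A K) < ε K) :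
    φ i (trimmedUnion F (fun k => {j | ε k ≤ φ j (Set.accumulate A k)}) A) < ε K := by
  set B := trimmedUnion F (fun k => {j | ε k ≤ φ j (Set.accumulate A k)}) A
  have hfin : (B ∩ F i).Finite := (F i).finite_toSet.inter_of_right B
  obtain ⟨k, hk, hKk, hBk⟩ := exists_subset_accumulate_of_subset_biUnion
    (hfin.coe_toFinset.trans_subset (trimmedUnion_inter_subset F A i)) (not_le.mpr hK)
  calc φ i B = φ i (B ∩ F i) := (hF i B).symm
    _ ≤ φ i (Set.accumulate A k) := (hφ i).mono (hfin.coe_toFinset.symm.trans_subset hBk)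
    _ < ε k := not_le.mp hk
    _ ≤ ε K := hε hKk

end IsSubmeasure

theorem isSubmeasure_mu (F : ℕ → Finset ℕ) (n : ℕ) : IsSubmeasure (mu F n) where
  empty := by simp only [mu, Set.empty_inter, Set.ncard_empty, Nat.cast_zero, zero_div]
  mono A B hAB := by
    unfold mu
    gcongr
    exact (F n).finite_toSet.inter_of_right B
  union_le A B := by
    unfold mu
    rw [← add_div, Set.union_inter_distrib_right]
    gcongr
    exact_mod_cast Set.ncard_union_le _ _

theorem mu_inter_self (F : ℕ → Finset ℕ) (n : ℕ) (A : Set ℕ) : mu F n (A ∩ F n) = mu F n A := by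
  simp only [mu, Set.inter_assoc, Set.inter_self]

theorem stmt1_general {α ι : Type*} {φ : ι → Set α → ℝ} (F : ι → Finset α)
    (hφ : ∀ i, IsSubmeasure (φ i)) (hF : ∀ i A, φ i (A ∩ F i) = φ i A) (A : ℕ → Set α)
    (hA : ∀ k, Tendsto (fun i => φ i (A k)) cofinite (nhds 0)) :
    ∃ B : Set α, Tendsto (fun i => φ i B) cofinite (nhds 0) ∧ ∀ k, (A k \ B).Finite := by
  let ε : ℕ → ℝ := fun k => 1 / (k + 1)
  have hε : Antitone ε := fun _ _ => Nat.one_div_le_one_div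
  have hlt (k : ℕ) : ∀ᶠ i in cofinite, φ i (Set.accumulate A k) < ε k :=
    (IsSubmeasure.tendsto_accumulate hφ hA k).eventually_lt_const Nat.one_div_pos_of_nat
  refine ⟨trimmedUnion F (fun k => {j | ε k ≤ φ j (Set.accumulate A k)}) A, ?_, fun k => ?_⟩
  · refine tendsto_order.mpr ⟨fun a ha => .of_forall fun i => ha.trans_le ((hφ i).nonneg _), ?_⟩
    intro δ hδ
    obtain ⟨K, hK⟩ := exists_nat_one_div_lt hδ
    filter_upwards [hlt K] with i hi
    exact (IsSubmeasure.apply_trimmedUnion_lt hφ hF hε hi).trans hK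
  · exact finite_sdiff_trimmedUnion F A (by simpa only [eventually_cofinite, not_lt] using hlt k)

/-- `I(F)` is a P-ideal: for every sequence `(A k)` of members of `I(F)` there is
`A ∈ I(F)` with `A k \ A` finite for every `k`. -/
theorem stmt1 (F : ℕ → Finset ℕ) (hne : ∀ n, (F n).Nonempty)
    (hcard : Tendsto (fun n => (F n).card) atTop atTop)
    (A : ℕ → Set ℕ)
    (hA : ∀ k, Tendsto (fun n => mu F n (A k)) atTop (nhds 0)) :
    ∃ B : Set ℕ, Tendsto (fun n => mu F n B) atTop (nhds 0) ∧
      ∀ k, (A k \ B).Finite := by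
  rw [← Nat.cofinite_eq_atTop] at hA ⊢
  exact stmt1_general F (isSubmeasure_mu F) (mu_inter_self F) A hA
end

section
/- Let F_n = [n!, n! + n] ∩ ℕ for each n ≥ 1 and let A = ⋃_n F_n. Then A has natural density zero (i.e. |A ∩ {0,1,…,n}|/(n+1) → 0 as n → ∞), while μ_n(A) = 1 for every n; in particular A belongs to the density zero ideal Z but A ∉ I(F), so I(F) ≠ Z. -/
open Filter

/-!
Let `A` be the union of a sequence of blocks, the `k`-th of which lies in `[a k, ∞)`. If `k` is the
last block needed to cover `A ∩ [0, N]`, then `a k ≤ N`, so `A` has density zero as soon as the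
blocks up to the `k`-th have `o(a k)` elements in total. For the blocks `[n!, n! + n]` this total
is less than `2 ^ (k + 1)`, which is `o(k!)`. On the other hand, `A` contains every block, so it is
not null along the blocks themselves.
-/

open Asymptotics Finset

/-- The ideal `I(F)` of the sets whose relative density in `F n` tends to zero, as a plain
family of sets. -/
def nullSets (F : ℕ → Finset ℕ) : Set (Set ℕ) :=
  {B | Tendsto (fun n => mu F n B) atTop (nhds 0)}

/-- The density zero ideal `Z`, as a plain family of sets. -/
def densityZeroSets : Set (Set ℕ) :=
  nullSets fun n => range (n + 1)

section Blocks

variable {F : ℕ → Finset ℕ}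

lemma mu_nonneg (n : ℕ) (B : Set ℕ) : 0 ≤ mu F n B := by
  unfold mu
  positivity

lemma mu_eq_one_of_subset {n : ℕ} {B : Set ℕ} (hn : (F n).Nonempty) (hB : (F n : Set ℕ) ⊆ B) :
    mu F n B = 1 := by
  rw [mu, Set.inter_eq_right.mpr hB, Set.ncard_coe_finset]
  exact div_self (Nat.cast_ne_zero.mpr hn.card_ne_zero)

lemma mu_iUnion_self {n : ℕ} (hn : (F n).Nonempty) : mu F n (⋃ j, (F j : Set ℕ)) = 1 :=
  mu_eq_one_of_subset hn (Set.subset_iUnion (fun j => (F j : Set ℕ)) n)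

lemma iUnion_notMem_nullSets (hF : ∃ᶠ n in atTop, (F n).Nonempty) :
    (⋃ j, (F j : Set ℕ)) ∉ nullSets F := by
  intro h
  obtain ⟨n, hn, hne⟩ := (hF.and_eventually (h.eventually_ne zero_ne_one)).exists
  exact hne (mu_iUnion_self hn)

variable {a : ℕ → ℕ}

lemma exists_iUnion_inter_range_subset_biUnion (ha : ∀ j, ∀ x ∈ F j, a j ≤ x) {N : ℕ}
    (hN : ((⋃ j, (F j : Set ℕ)) ∩ range (N + 1)).Nonempty) :
    ∃ k, a k ≤ N ∧ (⋃ j, (F j : Set ℕ)) ∩ range (N + 1) ⊆ (range (k + 1)).biUnion F := by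
  have exists_block : ∀ x ∈ (⋃ j, (F j : Set ℕ)) ∩ range (N + 1), ∃ j, x ∈ F j :=
    fun x hx => Set.mem_iUnion.mp hx.1
  choose! block mem_block using exists_block
  obtain ⟨y, hy, block_le⟩ :=
    Set.exists_max_image _ block ((finite_toSet (range (N + 1))).inter_of_right _) hN
  refine ⟨block y, (ha _ y (mem_block y hy)).trans (mem_range_succ_iff.mp hy.2), fun x hx => ?_⟩
  exact mem_biUnion.mpr ⟨block x, mem_range_succ_iff.mpr (block_le x hx), mem_block x hx⟩

lemma ncard_iUnion_inter_range_le (ha : ∀ j, ∀ x ∈ F j, a j ≤ x) {c : ℝ} (hc : 0 ≤ c) {K : ℕ}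
    (hK : ∀ k ≥ K, ((∑ j ∈ range (k + 1), #(F j) : ℕ) : ℝ) ≤ c * a k) (N : ℕ) :
    (((⋃ j, (F j : Set ℕ)) ∩ range (N + 1)).ncard : ℝ) ≤
      (∑ j ∈ range (K + 1), #(F j) : ℕ) + c * N := by
  rcases ((⋃ j, (F j : Set ℕ)) ∩ range (N + 1)).eq_empty_or_nonempty with hempty | hne
  · rw [hempty, Set.ncard_empty, Nat.cast_zero]
    positivity
  obtain ⟨k, hkN, hsub⟩ := exists_iUnion_inter_range_subset_biUnion ha hne
  have ncard_le : ((⋃ j, (F j : Set ℕ)) ∩ range (N + 1)).ncard ≤ ∑ j ∈ range (k + 1), #(F j) :=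
    calc _ ≤ #((range (k + 1)).biUnion F) := by
          rw [← Set.ncard_coe_finset]
          exact Set.ncard_le_ncard hsub (finite_toSet _)
      _ ≤ _ := card_biUnion_le
  refine (Nat.cast_le.mpr ncard_le).trans ?_
  rcases le_total K k with hKk | hkK
  · calc ((∑ j ∈ range (k + 1), #(F j) : ℕ) : ℝ) ≤ c * a k := hK k hKk
      _ ≤ c * N := by gcongr
      _ ≤ _ := le_add_of_nonneg_left (Nat.cast_nonneg _)
  · calc ((∑ j ∈ range (k + 1), #(F j) : ℕ) : ℝ) ≤ (∑ j ∈ range (K + 1), #(F j) : ℕ) := by gcongr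
      _ ≤ _ := le_add_of_nonneg_right (by positivity)

theorem iUnion_mem_densityZeroSets (ha : ∀ j, ∀ x ∈ F j, a j ≤ x)
    (hFa : (fun k => ((∑ j ∈ range (k + 1), #(F j) : ℕ) : ℝ)) =o[atTop] fun k => (a k : ℝ)) :
    (⋃ j, (F j : Set ℕ)) ∈ densityZeroSets := by
  refine tendsto_order.mpr ⟨fun ε hε => .of_forall fun N => hε.trans_le (mu_nonneg N _),
    fun ε hε => ?_⟩
  obtain ⟨K, hK⟩ : ∃ K, ∀ k ≥ K, ((∑ j ∈ range (k + 1), #(F j) : ℕ) : ℝ) ≤ ε / 2 * a k := by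
    simpa only [Real.norm_natCast, eventually_atTop] using hFa.bound (half_pos hε)
  set S : ℕ := ∑ j ∈ range (K + 1), #(F j)
  have mu_le (N : ℕ) :
      mu (fun n => range (n + 1)) N (⋃ j, (F j : Set ℕ)) ≤ S / ((N + 1 : ℕ) : ℝ) + ε / 2 := by
    rw [mu, card_range, div_le_iff₀ (by positivity), add_mul, div_mul_cancel₀ _ (by positivity)]
    refine (ncard_iUnion_inter_range_le ha (half_pos hε).le hK N).trans ?_
    gcongr
    exact N.le_succ
  have bound_tendsto :
      Tendsto (fun N : ℕ => S / ((N + 1 : ℕ) : ℝ) + ε / 2) atTop (nhds (0 + ε / 2)) :=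
    ((tendsto_const_div_atTop_nhds_zero_nat (S : ℝ)).comp (tendsto_add_atTop_nat 1)).add_const _
  have limit_lt : 0 + ε / 2 < ε := by linarith
  filter_upwards [bound_tendsto.eventually_lt_const limit_lt] with N hN
  exact (mu_le N).trans_lt hN

end Blocks

lemma isLittleO_pow_factorial (c : ℝ) :
    (fun n : ℕ => c ^ n) =o[atTop] fun n => (n.factorial : ℝ) :=
  isLittleO_of_tendsto (fun n hn => absurd hn (Nat.cast_ne_zero.mpr n.factorial_ne_zero))
    (FloorSemiring.tendsto_pow_div_factorial_atTop c)

lemma sum_range_succ_lt_two_pow (k : ℕ) : ∑ j ∈ range (k + 1), (j + 1) < 2 ^ (k + 1) :=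
  calc ∑ j ∈ range (k + 1), (j + 1) ≤ ∑ j ∈ range (k + 1), 2 ^ j :=
        sum_le_sum fun _ _ => Nat.lt_two_pow_self
    _ < 2 ^ (k + 1) := Nat.geomSum_lt le_rfl fun _ => mem_range.mp

lemma isLittleO_sum_range_succ_factorial :
    (fun k : ℕ => ((∑ j ∈ range (k + 1), (j + 1) : ℕ) : ℝ)) =o[atTop]
      fun k => (k.factorial : ℝ) := by
  refine IsBigO.trans_isLittleO (.of_bound 2 (.of_forall fun k => ?_)) (isLittleO_pow_factorial 2)
  rw [Real.norm_natCast, norm_pow, Real.norm_ofNat, ← pow_succ']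
  exact_mod_cast (sum_range_succ_lt_two_pow k).le

/-- For `F n = [n!, n! + n]` and `A = ⋃ n, F n`: `A` has natural density zero,
`μ_n(A) = 1` for every `n`, `A ∉ I(F)`, and hence `I(F) ≠ Z`. -/
theorem stmt3 (F : ℕ → Finset ℕ) (hF : ∀ n, F n = Finset.Icc n.factorial (n.factorial + n))
    (A : Set ℕ) (hA : A = ⋃ n, (F n : Set ℕ)) :
    Tendsto (fun n => mu (fun m => Finset.range (m + 1)) n A) atTop (nhds 0) ∧
    (∀ n, mu F n A = 1) ∧
    ¬ Tendsto (fun n => mu F n A) atTop (nhds 0) ∧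
    {B : Set ℕ | Tendsto (fun n => mu F n B) atTop (nhds 0)} ≠
      {B : Set ℕ | Tendsto (fun n => mu (fun m => Finset.range (m + 1)) n B) atTop (nhds 0)} := by
  obtain rfl := hA
  have le_of_mem (n : ℕ) : ∀ x ∈ F n, n.factorial ≤ x := fun x hx => by
    rw [hF, mem_Icc] at hx
    exact hx.1
  have card_block (n : ℕ) : #(F n) = n + 1 := by
    rw [hF, Nat.card_Icc]
    omega
  have nonempty_block (n : ℕ) : (F n).Nonempty := card_pos.mp (by rw [card_block]; exact n.succ_pos)
  have density_zero : (⋃ n, (F n : Set ℕ)) ∈ densityZeroSets :=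
    iUnion_mem_densityZeroSets le_of_mem
      (by simpa only [card_block] using isLittleO_sum_range_succ_factorial)
  have not_null : (⋃ n, (F n : Set ℕ)) ∉ nullSets F :=
    iUnion_notMem_nullSets (.of_forall nonempty_block)
  exact ⟨density_zero, fun n => mu_iUnion_self (nonempty_block n), not_null,
    (ne_of_mem_of_not_mem' density_zero not_null).symm⟩
end

section
/- There exists a partition (G_n)_{n∈ℕ} of ℕ into pairwise disjoint sets with ⋃_n G_n = ℕ such that limsup_{k→∞} μ_k(G_n) > 0 for every n, and limsup_{k→∞} μ_k(⋃_{j>n} G_j) → 0 as n → ∞. -/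
/-!
The upper density `A ↦ limsup_k μ_k(A)` takes all intermediate values. Given
`0 ≤ ε ≤ limsup_k μ_k(T)`, Zorn's lemma yields a set `S` that is maximal among the subsets of `T`
with `μ_k(S) ≤ ε` for all `k`. If the upper density of `S` were smaller than `ε`, then a single
point, whose mass in `F_k` is `1 / |F_k| → 0`, could be added to `S` without breaking the bound for
large `k`; by maximality `T \ S` therefore meets only finitely many `F_k`, hence is finite, and `S`
has the same upper density as `T`.

Iterating gives a decreasing sequence `T_n` of sets of upper density `2^{-n}`. The differences
`T_n \ T_{n+1}` have upper density at least `2^{-n} - 2^{-(n+1)}`, and the tails of the partition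
into these differences (with `⋂ T_n` and the complement of `T_0` put into the first part) lie in
the sets `T_{n+1}`.
-/

open Filter

variable {α : Type*}

/-- The proportion `|A ∩ s| / |s|` of the finite set `s` that lies in `A`; it is `0` for empty
`s`. For `α = ℕ` and `s = F n` this is `mu F n A`, by definition. -/
noncomputable def relDensity (s : Finset α) (A : Set α) : ℝ :=
  (A ∩ (s : Set α)).ncard / s.card

section relDensity

variable {s : Finset α} {A B : Set α}

lemma relDensity_nonneg (s : Finset α) (A : Set α) : 0 ≤ relDensity s A := by
  unfold relDensity
  positivity

lemma relDensity_mono (s : Finset α) (h : A ⊆ B) : relDensity s A ≤ relDensity s B := by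
  unfold relDensity
  gcongr
  exact s.finite_toSet.inter_of_right B

lemma relDensity_univ (hs : s.Nonempty) : relDensity s Set.univ = 1 := by
  have hcard : (s.card : ℝ) ≠ 0 := mod_cast hs.card_pos.ne'
  rw [relDensity, Set.univ_inter, Set.ncard_coe_finset, div_self hcard]

lemma relDensity_le_one (s : Finset α) (A : Set α) : relDensity s A ≤ 1 := by
  have hle : (A ∩ (s : Set α)).ncard ≤ s.card := by
    simpa only [Set.ncard_coe_finset] using Set.ncard_inter_le_ncard_right A (s : Set α)
  exact div_le_one_of_le₀ (mod_cast hle) (Nat.cast_nonneg _)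

lemma relDensity_union_le (s : Finset α) (A B : Set α) :
    relDensity s (A ∪ B) ≤ relDensity s A + relDensity s B := by
  unfold relDensity
  rw [← add_div, Set.union_inter_distrib_right]
  gcongr
  exact mod_cast Set.ncard_union_le _ _

lemma relDensity_le_ncard_div (s : Finset α) (hA : A.Finite) :
    relDensity s A ≤ A.ncard / s.card := by
  unfold relDensity
  gcongr
  exact Set.inter_subset_left

lemma relDensity_insert_of_notMem {x : α} (hx : x ∉ s) (A : Set α) :
    relDensity s (insert x A) = relDensity s A := by
  rw [relDensity, relDensity, Set.insert_inter_of_notMem (mt Finset.mem_coe.1 hx)]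

lemma relDensity_insert_le (s : Finset α) (x : α) (A : Set α) :
    relDensity s (insert x A) ≤ 1 / s.card + relDensity s A := by
  have hx : relDensity s {x} ≤ 1 / s.card := by
    simpa only [Set.ncard_singleton, Nat.cast_one] using
      relDensity_le_ncard_div s (Set.finite_singleton x)
  have hunion := relDensity_union_le s {x} A
  rw [Set.singleton_union] at hunion
  linarith

lemma exists_relDensity_sUnion_le (s : Finset α) {c : Set (Set α)} (hne : c.Nonempty)
    (hc : DirectedOn (· ⊆ ·) c) : ∃ A ∈ c, relDensity s (⋃₀ c) ≤ relDensity s A := by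
  obtain ⟨A, hAc, hA⟩ := hc.exists_mem_subset_of_finite_of_subset_sUnion hne
    (s.finite_toSet.inter_of_right (⋃₀ c)) Set.inter_subset_left
  refine ⟨A, hAc, ?_⟩
  calc relDensity s (⋃₀ c) = relDensity s (⋃₀ c ∩ s) := by
        rw [relDensity, relDensity, Set.inter_assoc, Set.inter_self]
    _ ≤ relDensity s A := relDensity_mono s hA

end relDensity

/-- The upper density `limsup_k |A ∩ F k| / |F k|` of `A` along the sequence `F` of finite sets. -/
noncomputable def upperDensity (F : ℕ → Finset α) (A : Set α) : ℝ :=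
  limsup (fun k => relDensity (F k) A) atTop

section upperDensity

variable {F : ℕ → Finset α} {A B S T : Set α} {ε : ℝ}

lemma isBoundedUnder_le_relDensity (F : ℕ → Finset α) (A : Set α) :
    IsBoundedUnder (· ≤ ·) atTop (fun k => relDensity (F k) A) :=
  isBoundedUnder_of ⟨1, fun k => relDensity_le_one (F k) A⟩

lemma isBoundedUnder_ge_relDensity (F : ℕ → Finset α) (A : Set α) :
    IsBoundedUnder (· ≥ ·) atTop (fun k => relDensity (F k) A) :=
  isBoundedUnder_of ⟨0, fun k => relDensity_nonneg (F k) A⟩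

lemma upperDensity_nonneg (F : ℕ → Finset α) (A : Set α) : 0 ≤ upperDensity F A :=
  le_limsup_of_frequently_le (Frequently.of_forall fun k => relDensity_nonneg (F k) A)
    (isBoundedUnder_le_relDensity F A)

lemma upperDensity_le_of_forall_le (h : ∀ k, relDensity (F k) A ≤ ε) : upperDensity F A ≤ ε :=
  limsup_le_of_le (isBoundedUnder_ge_relDensity F A).isCoboundedUnder_le (Eventually.of_forall h)

lemma upperDensity_mono (F : ℕ → Finset α) (h : A ⊆ B) : upperDensity F A ≤ upperDensity F B :=
  limsup_le_limsup (Eventually.of_forall fun k => relDensity_mono (F k) h)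
    (isBoundedUnder_ge_relDensity F A).isCoboundedUnder_le (isBoundedUnder_le_relDensity F B)

lemma upperDensity_union_le (F : ℕ → Finset α) (A B : Set α) :
    upperDensity F (A ∪ B) ≤ upperDensity F A + upperDensity F B := by
  have hA := isBoundedUnder_le_relDensity F A
  have hA' := isBoundedUnder_ge_relDensity F A
  have hB := isBoundedUnder_le_relDensity F B
  have hB' := (isBoundedUnder_ge_relDensity F B).isCoboundedUnder_le
  calc upperDensity F (A ∪ B)
      ≤ limsup ((fun k => relDensity (F k) A) + fun k => relDensity (F k) B) atTop :=
        limsup_le_limsup (Eventually.of_forall fun k => relDensity_union_le (F k) A B)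
          (isBoundedUnder_ge_relDensity F _).isCoboundedUnder_le (isBoundedUnder_le_add hA hB)
    _ ≤ upperDensity F A + upperDensity F B := limsup_add_le hA' hA hB' hB

lemma upperDensity_le_add_sdiff (F : ℕ → Finset α) (h : S ⊆ T) :
    upperDensity F T ≤ upperDensity F S + upperDensity F (T \ S) := by
  simpa only [Set.union_sdiff_cancel h] using upperDensity_union_le F S (T \ S)

lemma upperDensity_univ (hcard : Tendsto (fun k => (F k).card) atTop atTop) :
    upperDensity F Set.univ = 1 := by
  have hev : ∀ᶠ k in atTop, relDensity (F k) Set.univ = 1 :=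
    (hcard.eventually_gt_atTop 0).mono fun k hk => relDensity_univ (Finset.card_pos.1 hk)
  exact (limsup_congr hev).trans (limsup_const 1)

lemma upperDensity_eq_zero_of_finite (hcard : Tendsto (fun k => (F k).card) atTop atTop)
    (hA : A.Finite) : upperDensity F A = 0 := by
  have hbound : Tendsto (fun k => (A.ncard : ℝ) / (F k).card) atTop (nhds 0) :=
    (tendsto_natCast_atTop_atTop.comp hcard).const_div_atTop _
  exact (squeeze_zero (fun k => relDensity_nonneg (F k) A)
    (fun k => relDensity_le_ncard_div (F k) hA) hbound).limsup_eq

lemma exists_maximal_relDensity_le (F : ℕ → Finset α) (T : Set α) (hε : 0 ≤ ε) :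
    ∃ S, Maximal (fun S => S ⊆ T ∧ ∀ k, relDensity (F k) S ≤ ε) S := by
  have hempty : ∅ ⊆ T ∧ ∀ k, relDensity (F k) ∅ ≤ ε :=
    ⟨T.empty_subset, fun k => by simpa [relDensity] using hε⟩
  have hchain : ∀ c ⊆ {S | S ⊆ T ∧ ∀ k, relDensity (F k) S ≤ ε}, IsChain (· ⊆ ·) c →
      c.Nonempty → ⋃₀ c ⊆ T ∧ ∀ k, relDensity (F k) (⋃₀ c) ≤ ε := fun c hc hc_chain hne => by
    refine ⟨Set.sUnion_subset fun A hA => (hc hA).1, fun k => ?_⟩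
    obtain ⟨A, hAc, hA⟩ := exists_relDensity_sUnion_le (F k) hne hc_chain.directedOn
    exact hA.trans ((hc hAc).2 k)
  obtain ⟨S, -, hS⟩ := zorn_subset_nonempty {S | S ⊆ T ∧ ∀ k, relDensity (F k) S ≤ ε}
    (fun c hc hc_chain hne =>
      ⟨⋃₀ c, hchain c hc hc_chain hne, fun _ => Set.subset_sUnion_of_mem⟩) ∅ hempty
  exact ⟨S, hS⟩

lemma finite_sdiff_of_maximal (hcard : Tendsto (fun k => (F k).card) atTop atTop)
    (hS : Maximal (fun S => S ⊆ T ∧ ∀ k, relDensity (F k) S ≤ ε) S)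
    (hlt : upperDensity F S < ε) : (T \ S).Finite := by
  obtain ⟨δ, hSδ, hδε⟩ := exists_between hlt
  have hS_lt : ∀ᶠ k in atTop, relDensity (F k) S < δ :=
    eventually_lt_of_limsup_lt hSδ (isBoundedUnder_le_relDensity F S)
  have hpoint : ∀ᶠ k in atTop, 1 / ((F k).card : ℝ) < ε - δ :=
    ((tendsto_natCast_atTop_atTop.comp hcard).const_div_atTop 1).eventually_lt_const
      (sub_pos.2 hδε)
  obtain ⟨K, hK⟩ := eventually_atTop.1 (hS_lt.and hpoint)
  refine (Set.finite_iUnion fun k : Fin K => (F k).finite_toSet).subset ?_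
  rintro x ⟨hxT, hxS⟩
  by_contra hx
  have hx_early : ∀ k < K, x ∉ F k := fun k hk hxk => hx (Set.mem_iUnion.2 ⟨⟨k, hk⟩, hxk⟩)
  have hinsert : ∀ k, relDensity (F k) (insert x S) ≤ ε := fun k => by
    rcases lt_or_ge k K with hk | hk
    · rw [relDensity_insert_of_notMem (hx_early k hk)]
      exact hS.prop.2 k
    · have := relDensity_insert_le (F k) x S
      linarith [(hK k hk).1, (hK k hk).2]
  exact hxS (hS.le_of_ge ⟨Set.insert_subset hxT hS.prop.1, hinsert⟩ (Set.subset_insert x S)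
    (Set.mem_insert x S))

lemma exists_subset_upperDensity_eq (hcard : Tendsto (fun k => (F k).card) atTop atTop)
    (hε : 0 ≤ ε) (hεT : ε ≤ upperDensity F T) : ∃ S ⊆ T, upperDensity F S = ε := by
  obtain ⟨S, hS⟩ := exists_maximal_relDensity_le F T hε
  refine ⟨S, hS.prop.1, (upperDensity_le_of_forall_le hS.prop.2).eq_of_not_lt fun hlt => ?_⟩
  have hdiff : upperDensity F (T \ S) = 0 :=
    upperDensity_eq_zero_of_finite hcard (finite_sdiff_of_maximal hcard hS hlt)
  have hle := upperDensity_le_add_sdiff F hS.prop.1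
  linarith

lemma exists_antitone_upperDensity_eq (hcard : Tendsto (fun k => (F k).card) atTop atTop)
    {a : ℕ → ℝ} (ha : Antitone a) (ha_nonneg : ∀ n, 0 ≤ a n) (ha_le_one : a 0 ≤ 1) :
    ∃ T : ℕ → Set α, Antitone T ∧ ∀ n, upperDensity F (T n) = a n := by
  obtain ⟨T₀, -, hT₀⟩ := exists_subset_upperDensity_eq hcard (ha_nonneg 0)
    (ha_le_one.trans_eq (upperDensity_univ hcard).symm)
  have hstep : ∀ n (A : {A // upperDensity F A = a n}),
      ∃ B : {B // upperDensity F B = a (n + 1)}, B.1 ⊆ A.1 := fun n A => by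
    obtain ⟨B, hBA, hB⟩ := exists_subset_upperDensity_eq hcard (ha_nonneg (n + 1))
      ((ha n.le_succ).trans_eq A.2.symm)
    exact ⟨⟨B, hB⟩, hBA⟩
  choose next hnext using hstep
  let T : ∀ n, {A // upperDensity F A = a n} := fun n => Nat.rec ⟨T₀, hT₀⟩ next n
  exact ⟨fun n => (T n).1, antitone_nat_of_succ_le fun n => hnext n (T n), fun n => (T n).2⟩

end upperDensity

lemma exists_partition_of_antitone {T : ℕ → Set α} (hT : Antitone T) :
    ∃ G : ℕ → Set α, Pairwise (Function.onFun Disjoint G) ∧ (⋃ n, G n) = Set.univ ∧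
      (∀ n, T n \ T (n + 1) ⊆ G n) ∧ ∀ n, (⋃ j, ⋃ (_ : n < j), G j) ⊆ T (n + 1) := by
  -- Adjoining `⋂ m, T m` makes the complements cover everything without changing any difference
  -- of two of them, so only the first part of the partition is affected.
  let U : ℕ → Set α := fun n => (T (n + 1))ᶜ ∪ ⋂ m, T m
  have hU : Monotone U := fun m n hmn =>
    Set.union_subset_union_left _ (Set.compl_subset_compl.2 (hT (Nat.succ_le_succ hmn)))
  refine ⟨disjointed U, disjoint_disjointed U, ?_, fun n => ?_, fun n => ?_⟩
  · refine iUnion_disjointed.trans (Set.eq_univ_of_forall fun x => Set.mem_iUnion.2 ?_)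
    by_cases hx : ∀ n, x ∈ T (n + 1)
    · exact ⟨0, Or.inr (Set.mem_iInter.2 fun m => hT m.le_succ (hx m))⟩
    · obtain ⟨n, hn⟩ := not_forall.1 hx
      exact ⟨n, Or.inl hn⟩
  · rintro x ⟨hx, hx'⟩
    cases n with
    | zero => exact disjointed_zero U ▸ Or.inl hx'
    | succ n =>
      have hxU : x ∉ U n := fun h => h.elim (· hx) fun h => hx' (Set.mem_iInter.1 h _)
      exact hU.disjointed_succ (not_isMax n) ▸ ⟨Or.inl hx', hxU⟩
  · refine Set.iUnion₂_subset fun j hj x hx => ?_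
    rw [disjointed_eq_inter_compl] at hx
    have hxU : x ∉ U n := Set.mem_iInter₂.1 hx.2 n hj
    exact Set.notMem_compl_iff.1 fun h => hxU (Or.inl h)

theorem stmt7_general {F : ℕ → Finset α} (hcard : Tendsto (fun k => (F k).card) atTop atTop) :
    ∃ G : ℕ → Set α,
      Pairwise (Function.onFun Disjoint G) ∧
      (⋃ n, G n) = Set.univ ∧
      (∀ n, 0 < upperDensity F (G n)) ∧
      Tendsto (fun n => upperDensity F (⋃ j, ⋃ (_ : n < j), G j)) atTop (nhds 0) := by
  have ha : StrictAnti fun n : ℕ => (1 / 2 : ℝ) ^ n :=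
    pow_right_strictAnti₀ one_half_pos one_half_lt_one
  obtain ⟨T, hT, hT_eq⟩ := exists_antitone_upperDensity_eq hcard ha.antitone
    (fun n => by positivity) (pow_zero _).le
  obtain ⟨G, hdisj, hcover, hG, htail⟩ := exists_partition_of_antitone hT
  refine ⟨G, hdisj, hcover, fun n => ?_, ?_⟩
  · have hdiff := upperDensity_le_add_sdiff F (hT n.le_succ)
    have hle := upperDensity_mono F (hG n)
    rw [hT_eq, hT_eq] at hdiff
    linarith [ha n.lt_succ_self]
  · have hlim : Tendsto (fun n : ℕ => (1 / 2 : ℝ) ^ (n + 1)) atTop (nhds 0) :=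
      (tendsto_add_atTop_iff_nat 1).2
        (tendsto_pow_atTop_nhds_zero_of_lt_one one_half_pos.le one_half_lt_one)
    exact squeeze_zero (fun n => upperDensity_nonneg F _)
      (fun n => (upperDensity_mono F (htail n)).trans_eq (hT_eq (n + 1))) hlim

/-- There is a partition `(G n)` of ℕ with `limsup_k μ_k(G n) > 0` for every `n`
and `limsup_k μ_k(⋃_{j > n} G j) → 0` as `n → ∞`. -/
theorem stmt7 (F : ℕ → Finset ℕ) (hne : ∀ n, (F n).Nonempty)
    (hcard : Tendsto (fun n => (F n).card) atTop atTop) :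
    ∃ G : ℕ → Set ℕ,
      Pairwise (Function.onFun Disjoint G) ∧
      (⋃ n, G n) = Set.univ ∧
      (∀ n, 0 < limsup (fun k => mu F k (G n)) atTop) ∧
      Tendsto (fun n => limsup (fun k => mu F k (⋃ j, ⋃ (_ : n < j), G j)) atTop)
        atTop (nhds 0) :=
  stmt7_general hcard
end

section
/- Identifying subsets of ℕ with their characteristic functions in the Cantor space ℕ → Bool (with the product topology), the set {A ∈ ℕ → Bool : μ_n(A) → 0 as n → ∞} corresponding to I(F) is not an F_σ subset of the Cantor space, i.e., it is not equal to a countable union of closed sets. -/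
open Filter

/-- `muB F n x = |{i ∈ F n : x i = true}| / |F n|` for `x : ℕ → Bool`. -/
noncomputable def muB (F : ℕ → Finset ℕ) (n : ℕ) (x : ℕ → Bool) : ℝ :=
  ((F n).filter (fun i => x i = true)).card / (F n).card

/-!
Fix sets `B k ∉ I(F)` with `μ_n(B k) ≤ 2⁻ᵏ` for all `n`; a maximal set satisfying such a bound
works, since if it lay in `I(F)` then almost every point could be added to it, so it would be
cofinite. For `f : ℕ → ℕ` the union of the sets `B k ∩ [k, f k)` lies in `I(F)` by dominated
convergence, and it depends continuously on `f`. If `I(F)` were the union of closed sets `C k`,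
then by the Baire category theorem in `ℕ → ℕ` the unions indexed by some basic open set would all
lie in a single `C k`. Letting one unconstrained coordinate `f m` tend to infinity, `C k ⊆ I(F)`
would contain a set which includes `B m` up to finitely many points.
-/

open Set Topology

theorem exists_maximal_of_isCompact {α : Type*} [TopologicalSpace α] [Preorder α]
    [ClosedIciTopology α] {s : Set α} (hs : IsCompact s) (hne : s.Nonempty) :
    ∃ a, Maximal (· ∈ s) a := by
  obtain ⟨a₀, ha₀⟩ := hne
  suffices h : ∀ c ⊆ s, IsChain (· ≤ ·) c → ∀ y ∈ c, ∃ ub ∈ s, ∀ z ∈ c, z ≤ ub by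
    obtain ⟨a, -, ha⟩ := zorn_le_nonempty₀ s h a₀ ha₀
    exact ⟨a, ha⟩
  intro c hcs hc y hy
  have : Nonempty c := ⟨⟨y, hy⟩⟩
  obtain ⟨b, hbs, hb⟩ := hs.inter_iInter_nonempty (fun z : c => Ici (z : α))
    (fun _ => isClosed_Ici) fun u => by
      obtain ⟨z, hz⟩ := hc.directed.finset_le u
      exact ⟨z, hcs z.2, mem_iInter₂.2 hz⟩
  exact ⟨b, hbs, fun z hz => mem_iInter.1 hb ⟨z, hz⟩⟩

instance orderClosedTopology_of_discreteTopology {α : Type*} [TopologicalSpace α]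
    [DiscreteTopology α] [Preorder α] : OrderClosedTopology α :=
  ⟨isClosed_discrete _⟩

theorem exists_forall_update_mem_of_mem_interior {ι : Type*} [Infinite ι] [DecidableEq ι]
    {X : ι → Type*} [∀ i, TopologicalSpace (X i)] {s : Set (∀ i, X i)} {f : ∀ i, X i}
    (hf : f ∈ interior s) : ∃ m, ∀ a, Function.update f m a ∈ s := by
  obtain ⟨J, u, hu, hus⟩ := isOpen_pi_iff.1 isOpen_interior f hf
  obtain ⟨m, hm⟩ := Infinite.exists_notMem_finset J
  refine ⟨m, fun a => interior_subset (hus fun i hi => ?_)⟩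
  rw [Function.update_of_ne (ne_of_mem_of_not_mem (Finset.mem_coe.1 hi) hm)]
  exact (hu i hi).2

section muB

variable {F : ℕ → Finset ℕ} {n : ℕ} {x y : ℕ → Bool}

theorem muB_nonneg : 0 ≤ muB F n x := by
  unfold muB
  positivity

theorem muB_bot : muB F n ⊥ = 0 := by
  simp [muB]

theorem muB_top (hn : (F n).Nonempty) : muB F n ⊤ = 1 := by
  simp [muB, hn.ne_empty]

theorem muB_le_muB (h : ∀ i ∈ F n, x i ≤ y i) : muB F n x ≤ muB F n y := by
  unfold muB
  gcongr ((?_ : ℕ) : ℝ) / _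
  refine Finset.card_le_card fun i hi => ?_
  rw [Finset.mem_filter] at hi ⊢
  exact ⟨hi.1, h i hi.1 hi.2⟩

theorem muB_sup_le : muB F n (x ⊔ y) ≤ muB F n x + muB F n y := by
  simp only [muB, ← add_div, Pi.sup_apply, Bool.max_eq_or, Bool.or_eq_true, Finset.filter_or]
  gcongr
  exact_mod_cast Finset.card_union_le _ _

theorem muB_finsetSup_le {ι : Type*} (s : Finset ι) (z : ι → ℕ → Bool) :
    muB F n (s.sup z) ≤ ∑ k ∈ s, muB F n (z k) :=
  s.apply_sup_le_sum muB_bot muB_sup_le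

theorem muB_le_card_div {G : Finset ℕ} (h : ∀ i, x i = true → i ∈ G) :
    muB F n x ≤ G.card / (F n).card := by
  unfold muB
  gcongr
  exact fun i hi => h i (Finset.mem_filter.1 hi).2

theorem continuous_muB : Continuous (muB F n) := by
  have hind : Continuous fun b : Bool => ((if b = true then 1 else 0 : ℕ) : ℝ) :=
    continuous_of_discreteTopology
  unfold muB
  simp only [Finset.card_filter, Nat.cast_sum]
  exact (continuous_finsetSum _ fun i _ => hind.comp (continuous_apply i)).div_const _

end muB

/-- The ideal `I(F)` of the sets whose `F`-densities `μ_n` tend to `0`, viewed in the Cantor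
space. -/
def densityIdeal (F : ℕ → Finset ℕ) : Set (ℕ → Bool) :=
  {x | Tendsto (fun n => muB F n x) atTop (𝓝 0)}

section densityIdeal

variable {F : ℕ → Finset ℕ} {x y : ℕ → Bool}

theorem mem_densityIdeal_of_le (hxy : x ≤ y) (hy : y ∈ densityIdeal F) : x ∈ densityIdeal F :=
  squeeze_zero (fun _ => muB_nonneg) (fun _ => muB_le_muB fun i _ => hxy i) hy

theorem sup_mem_densityIdeal (hx : x ∈ densityIdeal F) (hy : y ∈ densityIdeal F) :
    x ⊔ y ∈ densityIdeal F :=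
  squeeze_zero (fun _ => muB_nonneg) (fun _ => muB_sup_le) (by simpa using hx.add hy)

theorem top_notMem_densityIdeal (hne : ∀ n, (F n).Nonempty) : ⊤ ∉ densityIdeal F := by
  intro h
  have hone : Tendsto (fun _ : ℕ => (1 : ℝ)) atTop (𝓝 0) :=
    h.congr fun n => muB_top (hne n)
  exact one_ne_zero (tendsto_const_nhds_iff.1 hone)

theorem tendsto_div_card (hcard : Tendsto (fun n => (F n).card) atTop atTop) (c : ℝ) :
    Tendsto (fun n => c / (F n).card) atTop (𝓝 0) :=
  (tendsto_natCast_atTop_atTop.comp hcard).const_div_atTop c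

theorem mem_densityIdeal_of_finite (hcard : Tendsto (fun n => (F n).card) atTop atTop)
    (hx : {i | x i = true}.Finite) : x ∈ densityIdeal F :=
  squeeze_zero (fun _ => muB_nonneg)
    (fun _ => muB_le_card_div fun _ hi => hx.mem_toFinset.2 hi) (tendsto_div_card hcard _)

theorem finite_setOf_eq_false_of_maximal (hcard : Tendsto (fun n => (F n).card) atTop atTop)
    {ε : ℝ} (hε : 0 < ε) (hmax : Maximal (fun y => ∀ n, muB F n y ≤ ε) x)
    (hx : x ∈ densityIdeal F) : {i | x i = false}.Finite := by
  have hlim : Tendsto (fun n => muB F n x + 1 / (F n).card) atTop (𝓝 0) := by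
    simpa using hx.add (tendsto_div_card hcard 1)
  obtain ⟨N, hN⟩ := eventually_atTop.1 (hlim.eventually_le_const hε)
  refine ((Finset.range N).biUnion F).finite_toSet.subset fun p hp => ?_
  by_contra hpF
  let z : ℕ → Bool := fun i => decide (i = p)
  have hadd : ∀ n, muB F n (x ⊔ z) ≤ ε := by
    intro n
    rcases le_or_gt N n with hn | hn
    · have hz : muB F n z ≤ 1 / (F n).card := by
        simpa using muB_le_card_div (F := F) (n := n) (x := z) (G := {p}) (by simp [z])
      exact muB_sup_le.trans ((add_le_add_right hz _).trans (hN n hn))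
    · refine (muB_le_muB fun i hi => ?_).trans (hmax.prop n)
      have hip : i ≠ p := by
        rintro rfl
        exact hpF (Finset.mem_biUnion.2 ⟨n, Finset.mem_range.2 hn, hi⟩)
      simp [z, hip]
  have hle : z p ≤ x p := (le_sup_right.trans (hmax.le_of_ge hadd le_sup_left)) p
  have hp' : x p = false := hp
  exact absurd hle (by simp [z, hp'])

theorem exists_notMem_densityIdeal_forall_muB_le (hne : ∀ n, (F n).Nonempty)
    (hcard : Tendsto (fun n => (F n).card) atTop atTop) {ε : ℝ} (hε : 0 < ε) :
    ∃ x ∉ densityIdeal F, ∀ n, muB F n x ≤ ε := by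
  have hclosed : IsClosed {x | ∀ n, muB F n x ≤ ε} := by
    simp only [ofPred_forall]
    exact isClosed_iInter fun n => isClosed_le continuous_muB continuous_const
  obtain ⟨x, hmax⟩ := exists_maximal_of_isCompact hclosed.isCompact
    ⟨⊥, fun n => muB_bot.trans_le hε.le⟩
  refine ⟨x, fun hx => top_notMem_densityIdeal hne ?_, hmax.prop⟩
  rw [← sup_compl_eq_top (x := x)]
  refine sup_mem_densityIdeal hx (mem_densityIdeal_of_finite hcard ?_)
  simpa using finite_setOf_eq_false_of_maximal hcard hε hmax hx

end densityIdeal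

/-- The truncation `x ∩ [0, m)` of a set `x`. -/
def trunc (x : ℕ → Bool) (m : ℕ) : ℕ → Bool :=
  fun i => x i && decide (i < m)

theorem trunc_le (x : ℕ → Bool) (m : ℕ) : trunc x m ≤ x :=
  fun _ => Bool.and_le_left _ _

theorem trunc_apply_of_lt (x : ℕ → Bool) {m i : ℕ} (h : i < m) : trunc x m i = x i := by
  simp [trunc, h]

/-- The union over `k` of the sets `B k ∩ [k, f k)`. Points below `k` are left out of the `k`-th
set so that membership of each point depends on finitely many values of `f`. -/
noncomputable def truncUnion (B : ℕ → ℕ → Bool) (f : ℕ → ℕ) : ℕ → Bool :=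
  fun i => (Finset.range (i + 1)).sup fun k => trunc (B k) (f k) i

theorem continuous_truncUnion (B : ℕ → ℕ → Bool) : Continuous (truncUnion B) :=
  continuous_pi fun i => Continuous.finset_sup_apply fun k _ =>
    (continuous_of_discreteTopology (f := fun m => trunc (B k) m i)).comp (continuous_apply k)

theorem truncUnion_update_of_lt (B : ℕ → ℕ → Bool) (f : ℕ → ℕ) (m : ℕ) {i j : ℕ} (h : i < j) :
    truncUnion B (Function.update f m j) i = truncUnion B (Function.update f m (i + 1)) i := by
  refine Finset.sup_congr rfl fun k _ => ?_
  rcases eq_or_ne k m with rfl | hk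
  · simp [trunc_apply_of_lt, h]
  · simp [hk]

theorem apply_le_truncUnion_apply {B : ℕ → ℕ → Bool} {f : ℕ → ℕ} {k i : ℕ} (hki : k ≤ i)
    (hi : i < f k) : B k i ≤ truncUnion B f i := by
  rw [← trunc_apply_of_lt (B k) hi]
  exact Finset.le_sup (f := fun k => trunc (B k) (f k) i) (Finset.mem_range_succ_iff.2 hki)

section truncUnion

variable {F : ℕ → Finset ℕ} {B : ℕ → ℕ → Bool}

theorem trunc_mem_densityIdeal (hcard : Tendsto (fun n => (F n).card) atTop atTop)
    (x : ℕ → Bool) (m : ℕ) : trunc x m ∈ densityIdeal F :=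
  mem_densityIdeal_of_finite hcard <| (finite_lt_nat m).subset fun i hi => by
    simp_all [trunc]

theorem muB_truncUnion_le_tsum {n : ℕ} {f : ℕ → ℕ}
    (hsum : Summable fun k => muB F n (trunc (B k) (f k))) :
    muB F n (truncUnion B f) ≤ ∑' k, muB F n (trunc (B k) (f k)) := by
  obtain ⟨N, hN⟩ := (F n).exists_nat_subset_range
  calc muB F n (truncUnion B f)
      ≤ muB F n ((Finset.range N).sup fun k => trunc (B k) (f k)) := by
        refine muB_le_muB fun i hi => ?_
        rw [Finset.sup_apply]
        exact Finset.sup_mono (Finset.range_subset_range.2 (Finset.mem_range.1 (hN hi)))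
    _ ≤ ∑ k ∈ Finset.range N, muB F n (trunc (B k) (f k)) := muB_finsetSup_le _ _
    _ ≤ ∑' k, muB F n (trunc (B k) (f k)) := hsum.sum_le_tsum _ fun _ _ => muB_nonneg

theorem truncUnion_mem_densityIdeal (hcard : Tendsto (fun n => (F n).card) atTop atTop)
    {u : ℕ → ℝ} (hu : Summable u) (hB : ∀ k n, muB F n (B k) ≤ u k) (f : ℕ → ℕ) :
    truncUnion B f ∈ densityIdeal F := by
  have hle : ∀ k n, muB F n (trunc (B k) (f k)) ≤ u k := fun k n =>
    (muB_le_muB fun i _ => trunc_le (B k) (f k) i).trans (hB k n)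
  have htsum : Tendsto (fun n => ∑' k, muB F n (trunc (B k) (f k))) atTop (𝓝 0) := by
    rw [← tsum_zero (α := ℝ) (β := ℕ)]
    refine tendsto_tsum_of_dominated_convergence hu
      (fun k => trunc_mem_densityIdeal hcard (B k) (f k)) (.of_forall fun n k => ?_)
    rw [Real.norm_of_nonneg muB_nonneg]
    exact hle k n
  exact squeeze_zero (fun _ => muB_nonneg)
    (fun n => muB_truncUnion_le_tsum (hu.of_nonneg_of_le (fun _ => muB_nonneg) (hle · n))) htsum

theorem mem_densityIdeal_of_forall_truncUnion_update_mem
    (hcard : Tendsto (fun n => (F n).card) atTop atTop) {C : Set (ℕ → Bool)} (hC : IsClosed C)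
    (hCF : C ⊆ densityIdeal F) {f : ℕ → ℕ} {m : ℕ}
    (h : ∀ j, truncUnion B (Function.update f m j) ∈ C) : B m ∈ densityIdeal F := by
  let x : ℕ → Bool := fun i => truncUnion B (Function.update f m (i + 1)) i
  have hlim : Tendsto (fun j => truncUnion B (Function.update f m j)) atTop (𝓝 x) :=
    tendsto_pi_nhds.2 fun i => tendsto_const_nhds.congr' <|
      (eventually_gt_atTop i).mono fun _ hj => (truncUnion_update_of_lt B f m hj).symm
  have hx : x ∈ densityIdeal F := hCF (hC.mem_of_tendsto hlim (.of_forall h))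
  have hle : B m ≤ x ⊔ trunc (B m) m := by
    intro i
    rcases lt_or_ge i m with hi | hi
    · exact (trunc_apply_of_lt (B m) hi).ge.trans le_sup_right
    · exact (apply_le_truncUnion_apply hi (by simp)).trans le_sup_left
  exact mem_densityIdeal_of_le hle (sup_mem_densityIdeal hx (trunc_mem_densityIdeal hcard _ _))

end truncUnion

/-- In the Cantor space `ℕ → Bool`, the set corresponding to `I(F)` is not `F_σ`. -/
theorem stmt8 (F : ℕ → Finset ℕ) (hne : ∀ n, (F n).Nonempty)
    (hcard : Tendsto (fun n => (F n).card) atTop atTop) :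
    ¬ ∃ C : ℕ → Set (ℕ → Bool), (∀ n, IsClosed (C n)) ∧
      {x : ℕ → Bool | Tendsto (fun n => muB F n x) atTop (nhds 0)} = ⋃ n, C n := by
  rintro ⟨C, hC, hU⟩
  change densityIdeal F = ⋃ k, C k at hU
  choose B hBF hB using fun k : ℕ =>
    exists_notMem_densityIdeal_forall_muB_le hne hcard (ε := (1 / 2) ^ k) (by positivity)
  have hmem : ∀ f, truncUnion B f ∈ densityIdeal F :=
    truncUnion_mem_densityIdeal hcard summable_geometric_two hB
  have hcover : ⋃ k, truncUnion B ⁻¹' C k = univ := by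
    rw [← preimage_iUnion, ← hU]
    exact eq_univ_of_forall hmem
  obtain ⟨k, f, hf⟩ := nonempty_interior_of_iUnion_of_closed
    (fun k => (hC k).preimage (continuous_truncUnion B)) hcover
  obtain ⟨m, hm⟩ := exists_forall_update_mem_of_mem_interior hf
  exact hBF m (mem_densityIdeal_of_forall_truncUnion_update_mem hcard (hC k)
    (hU ▸ subset_iUnion C k) hm)
end

section
/- Identifying subsets of ℕ with their characteristic functions in the Cantor space ℕ → Bool (with the product topology), the set {A ∈ ℕ → Bool : μ_n(A) → 0 as n → ∞} corresponding to I(F) is meager in the Cantor space. -/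
open Filter

/-! Fix `r < 1`. Among the sequences `x` prescribed on a finite set `t`, the one equal to `true` off
`t` has density at least `1 - |t| / |F n|` in `F n`, which exceeds `r` once `F n` is large. Hence
"some `n` beyond a given stage has density greater than `r`" is a dense open condition on `x`, so
a generic `x` has density greater than `r` infinitely often, and its densities cannot converge to a
limit below `r`. -/

open Finset Topology

section Topology

variable {ι X : Type*} [TopologicalSpace X]

theorem eventually_residual_frequently_mem {l : Filter ι} [l.IsCountablyGenerated] {U : ι → Set X}
    (hopen : ∀ n, IsOpen (U n)) (hdense : ∀ s ∈ l, Dense (⋃ n ∈ s, U n)) :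
    ∀ᶠ x in residual X, ∃ᶠ n in l, x ∈ U n := by
  obtain ⟨B, hB⟩ := l.exists_antitone_basis
  have hstage (k : ℕ) : ∀ᶠ x in residual X, x ∈ ⋃ n ∈ B k, U n :=
    residual_of_dense_open (isOpen_biUnion fun n _ => hopen n) (hdense _ (hB.mem k))
  filter_upwards [eventually_countable_forall.2 hstage] with x hx
  refine hB.frequently_iff.2 fun k _ => ?_
  simpa only [Set.mem_iUnion, exists_prop] using hx k

theorem dense_pi_of_forall_finset_exists_eq {α : Type*} {Y : α → Type*}
    [∀ i, TopologicalSpace (Y i)] {S : Set (∀ i, Y i)}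
    (h : ∀ (x : ∀ i, Y i) (t : Finset α), ∃ y ∈ S, ∀ i ∈ t, y i = x i) : Dense S := by
  refine dense_iff_inter_open.2 fun V hV ⟨x, hx⟩ => ?_
  obtain ⟨t, u, hu, htV⟩ := isOpen_pi_iff.1 hV x hx
  obtain ⟨y, hyS, hyx⟩ := h x t
  exact ⟨y, htV fun i hi => hyx i hi ▸ (hu i hi).2, hyS⟩

end Topology

section TrueDensity

variable {α ι : Type*}

/-- The proportion of the indices in `s` at which `x` is `true`, that is, the relative density in
`s` of the subset of `α` with characteristic function `x`. It is `0` when `s` is empty. It extends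
`muB` to an arbitrary index type: `muB F n` is `trueDensity (F n)`. -/
noncomputable def trueDensity (s : Finset α) (x : α → Bool) : ℝ :=
  #{i ∈ s | x i = true} / #s

theorem continuous_trueDensity (s : Finset α) : Continuous (trueDensity s) := by
  have hsum : trueDensity s = fun x => (∑ i ∈ s, if x i = true then (1 : ℝ) else 0) / #s := by
    funext x
    rw [trueDensity, natCast_card_filter]
  rw [hsum]
  refine (continuous_finsetSum s fun i _ => ?_).div_const _
  exact (continuous_of_discreteTopology (f := fun b : Bool => if b = true then (1 : ℝ) else 0)).comp
    (continuous_apply i)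

theorem one_sub_card_div_card_le_trueDensity {s t : Finset α} {x : α → Bool} (hs : s.Nonempty)
    (hx : ∀ i ∈ s, i ∉ t → x i = true) : 1 - (#t : ℝ) / #s ≤ trueDensity s x := by
  classical
  have hsub : s ⊆ t ∪ {i ∈ s | x i = true} := fun i hi => by
    by_cases hit : i ∈ t
    · exact mem_union_left _ hit
    · exact mem_union_right _ (mem_filter.2 ⟨hi, hx i hi hit⟩)
  have hcard : (#s : ℝ) ≤ #t + #{i ∈ s | x i = true} := by
    exact_mod_cast (card_le_card hsub).trans (card_union_le _ _)
  have hpos : (0 : ℝ) < #s := by exact_mod_cast hs.card_pos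
  rw [trueDensity, one_sub_div hpos.ne']
  gcongr
  linarith

theorem eventually_lt_one_sub_div_natCast {r : ℝ} (hr : r < 1) (c : ℝ) :
    ∀ᶠ n : ℕ in atTop, r < 1 - c / n := by
  have hlim : Tendsto (fun n : ℕ => 1 - c / n) atTop (𝓝 (1 - 0)) :=
    (tendsto_const_div_atTop_nhds_zero_nat c).const_sub 1
  exact hlim.eventually_const_lt (by rwa [sub_zero])

variable {l : Filter ι} {F : ι → Finset α}

theorem dense_iUnion_lt_trueDensity (hF : ∀ k, ∃ᶠ n in l, k ≤ #(F n)) {r : ℝ} (hr : r < 1)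
    {s : Set ι} (hs : s ∈ l) : Dense (⋃ n ∈ s, {x : α → Bool | r < trueDensity (F n) x}) := by
  classical
  refine dense_pi_of_forall_finset_exists_eq fun x t => ?_
  obtain ⟨k, hk⟩ := eventually_atTop.1
    ((eventually_lt_one_sub_div_natCast hr #t).and (eventually_gt_atTop 0))
  obtain ⟨n, hkn, hns⟩ := ((hF k).and_eventually hs).exists
  obtain ⟨hlt, hpos⟩ := hk _ hkn
  refine ⟨t.piecewise x fun _ => true, Set.mem_biUnion hns ?_, fun i hi => by simp [hi]⟩
  exact hlt.trans_le (one_sub_card_div_card_le_trueDensity (card_pos.1 hpos)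
    fun i _ hi => by simp [hi])

theorem eventually_residual_frequently_lt_trueDensity [l.IsCountablyGenerated]
    (hF : ∀ k, ∃ᶠ n in l, k ≤ #(F n)) {r : ℝ} (hr : r < 1) :
    ∀ᶠ x in residual (α → Bool), ∃ᶠ n in l, r < trueDensity (F n) x :=
  eventually_residual_frequently_mem
    (fun n => isOpen_lt continuous_const (continuous_trueDensity (F n)))
    fun _ => dense_iUnion_lt_trueDensity hF hr

theorem stmt10_general [l.IsCountablyGenerated] (hF : ∀ k, ∃ᶠ n in l, k ≤ #(F n)) {a : ℝ}
    (ha : a < 1) :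
    IsMeagre {x : α → Bool | Tendsto (fun n => trueDensity (F n) x) l (𝓝 a)} := by
  obtain ⟨r, har, hr⟩ := exists_between ha
  filter_upwards [eventually_residual_frequently_lt_trueDensity hF hr] with x hfreq hlim
  obtain ⟨n, hrn, hnr⟩ := (hfreq.and_eventually (hlim.eventually_lt_const har)).exists
  exact lt_asymm hrn hnr

end TrueDensity

/-- In the Cantor space `ℕ → Bool`, the set corresponding to `I(F)` is meager. -/
theorem stmt10 (F : ℕ → Finset ℕ) (hne : ∀ n, (F n).Nonempty)
    (hcard : Tendsto (fun n => (F n).card) atTop atTop) :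
    IsMeagre {x : ℕ → Bool | Tendsto (fun n => muB F n x) atTop (nhds 0)} :=
  stmt10_general (fun k => (hcard.eventually_ge_atTop k).frequently) zero_lt_one
end

section
/- The closed linear subspace c_{0,I(F)} = {f ∈ ℓ∞ : for every ε > 0, μ_n({i ∈ ℕ : ε ≤ |f i|}) → 0 as n → ∞} of bounded real sequences that are I(F)-convergent to 0 is not complemented in ℓ∞: there is no continuous linear map P : ℓ∞ → ℓ∞ with P ∘ P = P whose range is c_{0,I(F)}. -/
open Filter

/-!
This is Whitley's proof that `c₀` is not complemented in `ℓ∞`. A bounded functional vanishing on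
finitely supported sequences takes nonzero values at only countably many indicators of an almost
disjoint family, because those indicators are, up to finite sets, indicators of disjoint sets.
Hence, if `P` fixes the finitely supported sequences, then `1 - P`, tested at each of the countably
many coordinates, kills all but countably many of these indicators. It remains to find an
uncountable almost disjoint family of sets outside `I(F)`: its members are unions of blocks from a
disjoint sequence, each block filling more than half of some `F n`.
-/

open Function Set
open scoped ENNReal Topology lp

section AlmostDisjoint

variable {ι κ α : Type*}

/-- A family of sets is almost disjoint if its members at distinct indices have finite
intersection. The family is indexed, so an infinite set occurs at most once in it. -/
def IsAlmostDisjoint (A : α → Set ι) : Prop :=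
  Pairwise fun x y => (A x ∩ A y).Finite

theorem IsAlmostDisjoint.biUnion_finset {B : α → Set κ} (hB : IsAlmostDisjoint B)
    {G : κ → Finset ι} (hG : Pairwise (Disjoint on G)) :
    IsAlmostDisjoint fun x => ⋃ k ∈ B x, (G k : Set ι) := by
  intro x y hxy
  refine ((hB hxy).biUnion fun k _ => (G k).finite_toSet).subset ?_
  rintro i ⟨hx, hy⟩
  simp only [mem_iUnion, Finset.mem_coe, exists_prop] at hx hy
  obtain ⟨j, hj, hij⟩ := hx
  obtain ⟨k, hk, hik⟩ := hy
  obtain rfl : j = k := by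
    by_contra hjk
    exact Finset.disjoint_left.1 (hG hjk) hij hik
  exact mem_biUnion ⟨hj, hk⟩ hij

theorem finite_setOf_floor_natCast_mul_eq {r s : ℝ} (hrs : r ≠ s) :
    {n : ℕ | ⌊n * r⌋ = ⌊n * s⌋}.Finite := by
  refine (finite_Iio ⌈1 / |r - s|⌉₊).subset fun n hn => ?_
  have hlt : |n * r - n * s| < 1 := Int.abs_sub_lt_one_of_floor_eq_floor hn
  rw [← mul_sub, abs_mul, Nat.abs_cast] at hlt
  exact Nat.lt_ceil.2 ((lt_div_iff₀ (abs_pos.2 (sub_ne_zero.2 hrs))).2 hlt)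

theorem exists_isAlmostDisjoint_infinite :
    ∃ B : ℝ → Set ℕ, IsAlmostDisjoint B ∧ ∀ r, (B r).Infinite := by
  let code (r : ℝ) (n : ℕ) : ℕ := Encodable.encode (n, ⌊n * r⌋)
  have code_eq {r s : ℝ} {m n : ℕ} (h : code r m = code s n) : m = n ∧ ⌊m * r⌋ = ⌊n * s⌋ :=
    Prod.mk.inj (Encodable.encode_injective h)
  refine ⟨fun r => range (code r), fun r s hrs => ?_, fun r =>
    infinite_range_of_injective fun m n h => (code_eq h).1⟩
  refine ((finite_setOf_floor_natCast_mul_eq hrs).image (code r)).subset ?_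
  rintro _ ⟨⟨n, rfl⟩, m, hmn⟩
  obtain ⟨rfl, hfloor⟩ := code_eq hmn
  exact mem_image_of_mem _ hfloor.symm

end AlmostDisjoint

section BoundedSequences

variable {ι κ α : Type*} (𝕜 : Type*) [RCLike 𝕜]

/-- The indicator function of `A` as an element of `ℓ∞`. -/
noncomputable def linftyIndicator (A : Set ι) : ℓ^∞(ι, 𝕜) :=
  ⟨A.indicator 1, memℓp_infty ⟨1, by
    rintro _ ⟨i, rfl⟩
    exact (norm_indicator_le_norm_self 1 i).trans_eq norm_one⟩⟩

theorem coe_linftyIndicator (A : Set ι) : ⇑(linftyIndicator 𝕜 A) = A.indicator 1 := rfl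

variable {𝕜}

theorem norm_sum_smul_linftyIndicator_le {B : α → Set ι} {T : Finset α}
    (hB : (T : Set α).PairwiseDisjoint B) {c : α → 𝕜} {C : ℝ} (hC : 0 ≤ C)
    (hc : ∀ x ∈ T, ‖c x‖ ≤ C) : ‖∑ x ∈ T, c x • linftyIndicator 𝕜 (B x)‖ ≤ C := by
  refine lp.norm_le_of_forall_le hC fun i => ?_
  simp only [lp.coeFn_sum, lp.coeFn_smul, coe_linftyIndicator, Finset.sum_apply, Pi.smul_apply]
  by_cases hi : ∃ x ∈ T, i ∈ B x
  · obtain ⟨x, hxT, hix⟩ := hi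
    rw [Finset.sum_eq_single_of_mem x hxT]
    · simpa [hix] using hc x hxT
    · intro y hyT hyx
      have hiy : i ∉ B y := disjoint_left.1 (hB hxT hyT hyx.symm) hix
      simp [hiy]
  · push Not at hi
    rw [Finset.sum_eq_zero fun x hxT => by simp [hi x hxT], norm_zero]
    exact hC

theorem sum_norm_apply_linftyIndicator_le_of_pairwiseDisjoint (φ : ℓ^∞(ι, 𝕜) →L[𝕜] 𝕜)
    {B : α → Set ι} {T : Finset α} (hB : (T : Set α).PairwiseDisjoint B) :
    ∑ x ∈ T, ‖φ (linftyIndicator 𝕜 (B x))‖ ≤ ‖φ‖ := by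
  choose c hc_norm hc using fun x => RCLike.exists_norm_eq_mul_self (φ (linftyIndicator 𝕜 (B x)))
  have hsum : ((∑ x ∈ T, ‖φ (linftyIndicator 𝕜 (B x))‖ : ℝ) : 𝕜) =
      φ (∑ x ∈ T, c x • linftyIndicator 𝕜 (B x)) := by
    simp only [hc, map_sum, map_smul, smul_eq_mul]
  calc ∑ x ∈ T, ‖φ (linftyIndicator 𝕜 (B x))‖
      = ‖φ (∑ x ∈ T, c x • linftyIndicator 𝕜 (B x))‖ := by
        rw [← hsum, RCLike.norm_of_nonneg (by positivity)]
    _ ≤ ‖φ‖ := φ.unit_le_opNorm _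
        (norm_sum_smul_linftyIndicator_le hB zero_le_one fun x _ => (hc_norm x).le)

theorem apply_linftyIndicator_diff_of_finite_inter {φ : ℓ^∞(ι, 𝕜) →L[𝕜] 𝕜}
    (hφ : ∀ f : ℓ^∞(ι, 𝕜), (support f).Finite → φ f = 0) {A D : Set ι} (hAD : (A ∩ D).Finite) :
    φ (linftyIndicator 𝕜 (A \ D)) = φ (linftyIndicator 𝕜 A) := by
  rw [← sub_eq_zero, ← map_sub]
  refine hφ _ (hAD.subset fun i hi => ?_)
  by_contra hiAD
  have hagree : (A \ D).indicator (1 : ι → 𝕜) i = A.indicator 1 i := by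
    by_cases hiA : i ∈ A
    · have hiD : i ∉ D := fun hiD => hiAD ⟨hiA, hiD⟩
      simp [hiA, hiD]
    · simp [hiA]
  exact hi (sub_eq_zero.2 hagree)

namespace IsAlmostDisjoint

variable {A : α → Set ι}

theorem sum_norm_apply_linftyIndicator_le (hA : IsAlmostDisjoint A) {φ : ℓ^∞(ι, 𝕜) →L[𝕜] 𝕜}
    (hφ : ∀ f : ℓ^∞(ι, 𝕜), (support f).Finite → φ f = 0) (T : Finset α) :
    ∑ x ∈ T, ‖φ (linftyIndicator 𝕜 (A x))‖ ≤ ‖φ‖ := by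
  classical
  let D (x : α) : Set ι := ⋃ y ∈ T.erase x, A y
  have hAD (x : α) : (A x ∩ D x).Finite := by
    simp only [D, inter_iUnion]
    exact (T.erase x).finite_toSet.biUnion fun y hy => hA (Finset.ne_of_mem_erase hy).symm
  have hdisj : (T : Set α).PairwiseDisjoint fun x => A x \ D x := by
    intro x _ y hy hxy
    refine disjoint_left.2 fun i hix hiy => hix.2 ?_
    exact mem_biUnion (Finset.mem_erase.2 ⟨hxy.symm, hy⟩) hiy.1
  calc ∑ x ∈ T, ‖φ (linftyIndicator 𝕜 (A x))‖
      = ∑ x ∈ T, ‖φ (linftyIndicator 𝕜 (A x \ D x))‖ := by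
        simp only [apply_linftyIndicator_diff_of_finite_inter hφ (hAD _)]
    _ ≤ ‖φ‖ := sum_norm_apply_linftyIndicator_le_of_pairwiseDisjoint φ hdisj

theorem countable_apply_linftyIndicator_ne_zero (hA : IsAlmostDisjoint A)
    {φ : ℓ^∞(ι, 𝕜) →L[𝕜] 𝕜} (hφ : ∀ f : ℓ^∞(ι, 𝕜), (support f).Finite → φ f = 0) :
    {x | φ (linftyIndicator 𝕜 (A x)) ≠ 0}.Countable := by
  have hsummable : Summable fun x => ‖φ (linftyIndicator 𝕜 (A x))‖ :=
    summable_of_sum_le (fun _ => norm_nonneg _) (hA.sum_norm_apply_linftyIndicator_le hφ)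
  simpa only [support, norm_ne_zero_iff] using hsummable.countable_support

theorem countable_map_linftyIndicator_ne_zero [Countable κ] (hA : IsAlmostDisjoint A)
    {Q : ℓ^∞(ι, 𝕜) →L[𝕜] ℓ^∞(κ, 𝕜)} (hQ : ∀ f : ℓ^∞(ι, 𝕜), (support f).Finite → Q f = 0) :
    {x | Q (linftyIndicator 𝕜 (A x)) ≠ 0}.Countable := by
  let coord (k : κ) : ℓ^∞(ι, 𝕜) →L[𝕜] 𝕜 := (lp.evalCLM 𝕜 (fun _ : κ => 𝕜) ∞ k).comp Q
  have hcoord (k : κ) (f : ℓ^∞(ι, 𝕜)) (hf : (support f).Finite) : coord k f = 0 := by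
    simp only [coord, ContinuousLinearMap.comp_apply, hQ f hf, map_zero]
  refine (countable_iUnion fun k =>
    hA.countable_apply_linftyIndicator_ne_zero (hcoord k)).mono fun x hx => ?_
  obtain ⟨k, hk⟩ : ∃ k, Q (linftyIndicator 𝕜 (A x)) k ≠ 0 := by
    by_contra! h
    exact hx (lp.ext (funext h))
  exact mem_iUnion.2 ⟨k, hk⟩

theorem exists_map_linftyIndicator_eq_self [Countable ι] [Uncountable α] (hA : IsAlmostDisjoint A)
    {P : ℓ^∞(ι, 𝕜) →L[𝕜] ℓ^∞(ι, 𝕜)} (hP : ∀ f : ℓ^∞(ι, 𝕜), (support f).Finite → P f = f) :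
    ∃ x, P (linftyIndicator 𝕜 (A x)) = linftyIndicator 𝕜 (A x) := by
  have hcountable := hA.countable_map_linftyIndicator_ne_zero (Q := P - .id 𝕜 _)
    fun f hf => sub_eq_zero.2 (hP f hf)
  by_contra! hmoved
  exact not_countable_univ (hcountable.mono fun x _ => sub_ne_zero.2 (hmoved x))

end IsAlmostDisjoint

end BoundedSequences

section Density

variable {F : ℕ → Finset ℕ}

theorem mu_mono {n : ℕ} {A B : Set ℕ} (hAB : A ⊆ B) : mu F n A ≤ mu F n B := by
  unfold mu
  have hcard : (A ∩ F n).ncard ≤ (B ∩ F n).ncard :=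
    ncard_le_ncard (inter_subset_inter_left _ hAB) ((F n).finite_toSet.inter_of_right B)
  gcongr

theorem half_lt_mu_sdiff {n : ℕ} {S : Finset ℕ} (hS : 2 * S.card < (F n).card) :
    1 / 2 < mu F n ↑(F n \ S) := by
  have hinter : (↑(F n \ S) ∩ F n : Set ℕ) = ↑(F n \ S) :=
    inter_eq_left.2 (Finset.coe_subset.2 Finset.sdiff_subset)
  have hpos : (0 : ℝ) < (F n).card := by exact_mod_cast (Nat.zero_le _).trans_lt hS
  have hhalf : (F n).card < 2 * (F n \ S).card := by
    have := Finset.le_card_sdiff S (F n)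
    lia
  rw [mu, hinter, ncard_coe_finset, lt_div_iff₀ hpos, one_div_mul_eq_div, div_lt_iff₀' two_pos]
  exact_mod_cast hhalf

theorem tendsto_mu_zero_of_finite (hcard : Tendsto (fun n => (F n).card) atTop atTop) {A : Set ℕ}
    (hA : A.Finite) : Tendsto (fun n => mu F n A) atTop (𝓝 0) := by
  have hlim : Tendsto (fun n => (A.ncard : ℝ) / (F n).card) atTop (𝓝 0) :=
    tendsto_const_nhds.div_atTop (tendsto_natCast_atTop_atTop.comp hcard)
  refine squeeze_zero (fun n => by unfold mu; positivity) (fun n => ?_) hlim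
  have hle : (A ∩ F n).ncard ≤ A.ncard := ncard_le_ncard inter_subset_left hA
  unfold mu
  gcongr

theorem exists_disjoint_half_lt_mu (hcard : Tendsto (fun n => (F n).card) atTop atTop) :
    ∃ (c : ℕ → ℕ) (G : ℕ → Finset ℕ), StrictMono c ∧ Pairwise (Disjoint on G) ∧
      ∀ k, 1 / 2 < mu F (c k) (G k) := by
  obtain ⟨block, hhalf, hlater⟩ := exists_seq_of_forall_finset_exists
    (fun b : ℕ × Finset ℕ => 1 / 2 < mu F b.1 b.2)
    (fun b b' => b.1 < b'.1 ∧ Disjoint b.2 b'.2) fun s _ => by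
      let S := s.biUnion Prod.snd
      obtain ⟨n, hcard_n, hn⟩ := ((hcard.eventually_gt_atTop (2 * S.card)).and
        ((eventually_all_finset s).2 fun b _ => eventually_gt_atTop b.1)).exists
      refine ⟨(n, F n \ S), half_lt_mu_sdiff hcard_n, fun b hb => ⟨hn b hb, ?_⟩⟩
      exact Finset.disjoint_sdiff.mono_left (Finset.subset_biUnion_of_mem Prod.snd hb)
  exact ⟨fun k => (block k).1, fun k => (block k).2, fun j k hjk => (hlater j k hjk).1,
    (pairwise_disjoint_on _).2 fun j k hjk => (hlater j k hjk).2, hhalf⟩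

theorem exists_isAlmostDisjoint_not_tendsto_mu
    (hcard : Tendsto (fun n => (F n).card) atTop atTop) :
    ∃ A : ℝ → Set ℕ, IsAlmostDisjoint A ∧ ∀ r, ¬ Tendsto (fun n => mu F n (A r)) atTop (𝓝 0) := by
  obtain ⟨c, G, hc, hdisj, hhalf⟩ := exists_disjoint_half_lt_mu hcard
  obtain ⟨B, hB, hinf⟩ := exists_isAlmostDisjoint_infinite
  refine ⟨fun r => ⋃ k ∈ B r, (G k : Set ℕ), hB.biUnion_finset hdisj, fun r hlim => ?_⟩
  have hsmall : ∀ᶠ k in atTop, mu F (c k) (⋃ k ∈ B r, (G k : Set ℕ)) < 1 / 2 :=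
    hc.tendsto_atTop.eventually (hlim.eventually_lt_const one_half_pos)
  obtain ⟨k, hk, hlt⟩ := ((Nat.frequently_atTop_iff_infinite.2 (hinf r)).and_eventually
    hsmall).exists
  have hblock : (G k : Set ℕ) ⊆ ⋃ k ∈ B r, (G k : Set ℕ) :=
    subset_biUnion_of_mem (u := fun k => (G k : Set ℕ)) hk
  exact lt_asymm hlt ((hhalf k).trans_le (mu_mono hblock))

variable (F) in
/-- The space `c_{0,I(F)}` of bounded real sequences that are `I(F)`-convergent to `0`, as a subset
of `ℓ∞`. -/
def nullSequences : Set ℓ^∞(ℕ, ℝ) :=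
  {f | ∀ ε : ℝ, 0 < ε → Tendsto (fun n => mu F n {i : ℕ | ε ≤ |f i|}) atTop (𝓝 0)}

theorem mem_nullSequences_of_finite_support (hcard : Tendsto (fun n => (F n).card) atTop atTop)
    {f : ℓ^∞(ℕ, ℝ)} (hf : (support f).Finite) : f ∈ nullSequences F := fun _ hε =>
  tendsto_mu_zero_of_finite hcard (hf.subset fun _ hi => abs_pos.1 (hε.trans_le hi))

theorem tendsto_mu_zero_of_linftyIndicator_mem_nullSequences {A : Set ℕ}
    (hA : linftyIndicator ℝ A ∈ nullSequences F) : Tendsto (fun n => mu F n A) atTop (𝓝 0) := by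
  have hlevel : {i : ℕ | 1 ≤ |linftyIndicator ℝ A i|} = A := by
    ext i
    by_cases hi : i ∈ A <;> simp [coe_linftyIndicator, hi]
  simpa only [hlevel] using hA 1 one_pos

end Density

theorem stmt12_general (F : ℕ → Finset ℕ) (hcard : Tendsto (fun n => (F n).card) atTop atTop) :
    ¬ ∃ P : ℓ^∞(ℕ, ℝ) →L[ℝ] ℓ^∞(ℕ, ℝ),
      (∀ f : ℓ^∞(ℕ, ℝ), (support f).Finite → P f = f) ∧ range P ⊆ nullSequences F := by
  rintro ⟨P, hfix, hrange⟩
  obtain ⟨A, hA, hnot⟩ := exists_isAlmostDisjoint_not_tendsto_mu hcard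
  obtain ⟨r, hr⟩ := hA.exists_map_linftyIndicator_eq_self hfix
  exact hnot r (tendsto_mu_zero_of_linftyIndicator_mem_nullSequences (hrange ⟨_, hr⟩))

/-- The subspace of bounded real sequences that are `I(F)`-convergent to `0`
is not complemented in `ℓ∞`: no continuous linear projection of `ℓ∞` has it as
its range. -/
theorem stmt12 (F : ℕ → Finset ℕ) (hne : ∀ n, (F n).Nonempty)
    (hcard : Tendsto (fun n => (F n).card) atTop atTop) :
    ¬ ∃ P : lp (fun _ : ℕ => ℝ) ⊤ →L[ℝ] lp (fun _ : ℕ => ℝ) ⊤,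
      (∀ f, P (P f) = P f) ∧
      Set.range P =
        {f : lp (fun _ : ℕ => ℝ) ⊤ | ∀ ε : ℝ, 0 < ε →
          Tendsto (fun n => mu F n {i : ℕ | ε ≤ |f i|}) atTop (nhds 0)} := by
  rintro ⟨P, hidem, hrange⟩
  refine stmt12_general F hcard ⟨P, fun f hf => ?_, hrange.subset⟩
  obtain ⟨g, rfl⟩ : f ∈ range P := hrange ▸ mem_nullSequences_of_finite_support hcard hf
  exact hidem g
end
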